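/- Let (X,α) be a partial metric space. Then its tight span (T(X,α), σ) is a hyperconvex partial metric space: for every r : ℝ≥0∞ and every Θ : T(X,α) → ℝ≥0∞ with r ≤ Θ p and σ p p ≤ Θ p for all p ∈ T(X,α), and σ p q + r ≤ Θ p + Θ q for all p, q ∈ T(X,α), there exists ζ ∈ T(X,α) with σ p ζ ≤ Θ p for all p ∈ T(X,α). -/

import Mathlib

/-!
Write `T` for the tight span with its partial metric `σ`, and `h x = (α x x, α x ·)` for the
canonical map `X → T`. Three facts carry the proof.

* `(T, σ)` is a partial metric space with `σ p p = p.1` (`pmSigma_self`, `pmSigma_comm`,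
  `pmSigma_triangle`), and `σ (h x) p = p.2 x` (`pmSigma_embed`).
* In any partial metric space, every admissible pair `(r, μ)` lies above a point `(r, μ')` of the
  tight span (`exists_le_mem_pmTightSpan`): Zorn's lemma gives a minimal admissible `μ' ≤ μ`, and
  if `μ'` violated the defining equation at some point, its value there could be lowered.
* A point `(s, l)` of a tight span is Lipschitz: `l y + α x x ≤ l x + α x y` (`lipschitz`).

The second fact, applied to the space `T` itself, replaces `Θ` by a smaller `Θ'` with
`(r, Θ')` in the tight span of `T`. The point sought is `ζ = (r, Θ' ∘ h)`. The Lipschitz property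
of `Θ'` on `T`, read between `p` and `h x`, says `Θ' (h x) + p.1 ≤ Θ' p + p.2 x`. This is
precisely the bound `σ p ζ ≤ Θ' p`, and it also shows that the supremum over `T` expressing
`Θ' (h x)` is already controlled by the points of `X`, so that `ζ ∈ T`.
-/

open scoped ENNReal

/-- The tight span of a partial metric space `(X, α)`: pairs `(r, μ)` with
`α x x ≤ μ x` and `μ x = r ⊔ α x x ⊔ ⨆ y, (α x y + r - μ y)` for all `x`. -/
def pmTightSpan {X : Type*} (α : X → X → ℝ≥0∞) : Set (ℝ≥0∞ × (X → ℝ≥0∞)) :=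
  {p | ∀ x, α x x ≤ p.2 x ∧ p.2 x = p.1 ⊔ α x x ⊔ ⨆ y, (α x y + p.1 - p.2 y)}

/-- The partial metric on the tight span. -/
noncomputable def pmSigma {X : Type*} (p q : ℝ≥0∞ × (X → ℝ≥0∞)) : ℝ≥0∞ :=
  p.1 ⊔ q.1 ⊔ ⨆ x, (q.2 x + p.1 - p.2 x)

namespace PMTightSpan

variable {X : Type*} {α : X → X → ℝ≥0∞}

theorem fst_le {p : ℝ≥0∞ × (X → ℝ≥0∞)} (hp : p ∈ pmTightSpan α) (x : X) : p.1 ≤ p.2 x := by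
  rw [(hp x).2]; exact le_sup_left.trans le_sup_left

theorem add_fst_le {p : ℝ≥0∞ × (X → ℝ≥0∞)} (hp : p ∈ pmTightSpan α) (x y : X) :
    α x y + p.1 ≤ p.2 x + p.2 y := by
  rw [← tsub_le_iff_right]
  conv_rhs => rw [(hp x).2]
  exact le_sup_of_le_right (le_iSup (fun y => α x y + p.1 - p.2 y) y)

/-- An upper bound for a truncated difference plus a constant; it holds even at `b = ∞`,
where `a - b = 0`. -/
theorem tsub_add_le {a b c d : ℝ≥0∞} (h1 : c ≤ d) (h2 : a + c ≤ d + b) : a - b + c ≤ d := by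
  by_cases hb : b = ∞
  · simpa [hb] using h1
  rcases le_total a b with hab | hab
  · simpa [tsub_eq_zero_of_le hab] using h1
  · have h : a - b + c + b ≤ d + b := by
      rwa [add_right_comm, tsub_add_cancel_of_le hab]
    exact (ENNReal.add_le_add_iff_right hb).1 h

/-- The elimination rule for the defining equation of the tight span: upper bounds on `p.2 x + c`
can be checked on the three terms of which `p.2 x` is the supremum. -/
theorem snd_add_le {p : ℝ≥0∞ × (X → ℝ≥0∞)} (hp : p ∈ pmTightSpan α) {x : X} {c d : ℝ≥0∞}
    (h1 : p.1 + c ≤ d) (h2 : α x x + c ≤ d) (h3 : ∀ y, α x y + p.1 + c ≤ d + p.2 y) :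
    p.2 x + c ≤ d := by
  have hcd : c ≤ d := le_add_self.trans h1
  by_cases hc : c = ∞
  · simp [top_le_iff.1 (hc ▸ hcd)]
  rw [(hp x).2]
  have key : p.1 ⊔ α x x ⊔ ⨆ y, (α x y + p.1 - p.2 y) ≤ d - c :=
    sup_le (sup_le (ENNReal.le_sub_of_add_le_right hc h1) (ENNReal.le_sub_of_add_le_right hc h2))
      (iSup_le fun y => ENNReal.le_sub_of_add_le_right hc (tsub_add_le hcd (h3 y)))
  calc _ ≤ d - c + c := by gcongr
    _ = d := tsub_add_cancel_of_le hcd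

theorem lipschitz (hα1 : ∀ x y, α x x ⊔ α y y ≤ α x y) (hαsym : ∀ x y, α x y = α y x)
    (hαtri : ∀ x y z, α x z + α y y ≤ α x y + α y z)
    {p : ℝ≥0∞ × (X → ℝ≥0∞)} (hp : p ∈ pmTightSpan α) (x y : X) :
    p.2 y + α x x ≤ p.2 x + α x y := by
  refine snd_add_le hp ?_ ?_ fun z => ?_
  · exact add_le_add (fst_le hp x) (le_sup_left.trans (hα1 x y))
  · rw [add_comm]
    exact add_le_add (hp x).1 (le_sup_right.trans (hα1 x y))
  · calc α y z + p.1 + α x x = α y z + α x x + p.1 := by ring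
      _ ≤ α y x + α x z + p.1 := add_le_add (hαtri y x z) le_rfl
      _ = α x y + (α x z + p.1) := by rw [hαsym y x]; ring
      _ ≤ α x y + (p.2 x + p.2 z) := add_le_add le_rfl (add_fst_le hp x z)
      _ = p.2 x + α x y + p.2 z := by ring

/-- Every admissible pair `(r, μ)` dominates a point of the tight span with the same first
component. -/
theorem exists_le_mem_pmTightSpan (hαsym : ∀ x y, α x y = α y x) (r : ℝ≥0∞) (μ : X → ℝ≥0∞)
    (h1 : ∀ x, r ≤ μ x) (h2 : ∀ x, α x x ≤ μ x) (h3 : ∀ x y, α x y + r ≤ μ x + μ y) :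
    ∃ μ', μ' ≤ μ ∧ (r, μ') ∈ pmTightSpan α := by
  classical
  let S : Set (X → ℝ≥0∞)ᵒᵈ :=
    {m | (∀ x, r ≤ OrderDual.ofDual m x) ∧ (∀ x, α x x ≤ OrderDual.ofDual m x) ∧
      ∀ x y, α x y + r ≤ OrderDual.ofDual m x + OrderDual.ofDual m y}
  obtain ⟨m, hm, hmax⟩ := zorn_le_nonempty₀ S (by
    intro c hcS hc m0 hm0
    refine ⟨OrderDual.toDual fun x => ⨅ m : c, OrderDual.ofDual m.1 x, ⟨?_, ?_, ?_⟩, ?_⟩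
    · exact fun x => le_iInf fun m => (hcS m.2).1 x
    · exact fun x => le_iInf fun m => (hcS m.2).2.1 x
    · intro x y
      -- The two infima may be taken along a common index because `c` is a chain.
      refine ENNReal.le_iInf_add_iInf fun m n => ?_
      rcases hc.total m.2 n.2 with h | h
      · exact ((hcS n.2).2.2 x y).trans (by gcongr; exact h x)
      · exact ((hcS m.2).2.2 x y).trans (by gcongr; exact h y)
    · exact fun m hm x => iInf_le (fun m : c => OrderDual.ofDual m.1 x) ⟨m, hm⟩)
    (OrderDual.toDual μ) ⟨h1, h2, h3⟩
  obtain ⟨⟨g1, g2, g3⟩, hmin⟩ := hmax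
  set l : X → ℝ≥0∞ := OrderDual.ofDual m with hl
  refine ⟨l, hm, fun x => ⟨g2 x, ?_⟩⟩
  simp only
  set f := r ⊔ α x x ⊔ ⨆ y, (α x y + r - l y) with hf
  have hfl : f ≤ l x := sup_le (sup_le (g1 x) (g2 x)) (iSup_le fun y => by
    rw [tsub_le_iff_right]; exact g3 x y)
  have hrf : r ≤ f := le_sup_left.trans le_sup_left
  have haf : α x x ≤ f := le_sup_right.trans le_sup_left
  have hyf : ∀ y, α x y + r ≤ f + l y := fun y => by
    rw [← tsub_le_iff_right]
    exact le_sup_of_le_right (le_iSup (fun y => α x y + r - l y) y)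
  -- Lowering `l x` to `f` keeps `l` admissible, so minimality forces `l x ≤ f`.
  have hmem : OrderDual.toDual (Function.update l x f) ∈ S := by
    refine ⟨fun y => ?_, fun y => ?_, fun y z => ?_⟩
    · rcases eq_or_ne y x with rfl | hy
      · simpa using hrf
      · simpa [hy] using g1 y
    · rcases eq_or_ne y x with rfl | hy
      · simpa using haf
      · simpa [hy] using g2 y
    · rcases eq_or_ne y x with rfl | hy <;> rcases eq_or_ne z y with rfl | hz
      · simpa using add_le_add haf hrf
      · simpa [hz] using hyf z
      · simpa [hy] using g3 z z
      · rcases eq_or_ne z x with rfl | hz'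
        · simpa [hy, add_comm, hαsym y z] using hyf y
        · simpa [hy, hz'] using g3 y z
  have hle : m ≤ OrderDual.toDual (Function.update l x f) := by
    change Function.update l x f ≤ l
    intro y
    rcases eq_or_ne y x with rfl | hy
    · simpa using hfl
    · simp [hy]
  have := hmin hmem hle
  have hx : l x ≤ Function.update l x f x := this x
  exact le_antisymm (by simpa using hx) hfl

theorem fst_le_pmSigma_left (p q : ℝ≥0∞ × (X → ℝ≥0∞)) : p.1 ≤ pmSigma p q :=
  le_sup_left.trans le_sup_left

theorem fst_le_pmSigma_right (p q : ℝ≥0∞ × (X → ℝ≥0∞)) : q.1 ≤ pmSigma p q :=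
  le_sup_right.trans le_sup_left

theorem add_le_pmSigma_add (p q : ℝ≥0∞ × (X → ℝ≥0∞)) (x : X) :
    q.2 x + p.1 ≤ pmSigma p q + p.2 x := by
  rw [← tsub_le_iff_right]
  exact le_sup_of_le_right (le_iSup (fun x => q.2 x + p.1 - p.2 x) x)

theorem pmSigma_le {p q : ℝ≥0∞ × (X → ℝ≥0∞)} {d : ℝ≥0∞} (h1 : p.1 ≤ d) (h2 : q.1 ≤ d)
    (h3 : ∀ x, q.2 x + p.1 ≤ d + p.2 x) : pmSigma p q ≤ d :=
  sup_le (sup_le h1 h2) (iSup_le fun x => by rw [tsub_le_iff_right]; exact h3 x)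

theorem pmSigma_self (p : ℝ≥0∞ × (X → ℝ≥0∞)) : pmSigma p p = p.1 :=
  le_antisymm (pmSigma_le le_rfl le_rfl fun _ => (add_comm _ _).le) (fst_le_pmSigma_left p p)

theorem pmSigma_le_comm {p q : ℝ≥0∞ × (X → ℝ≥0∞)} (hp : p ∈ pmTightSpan α)
    (hq : q ∈ pmTightSpan α) : pmSigma p q ≤ pmSigma q p := by
  refine pmSigma_le (fst_le_pmSigma_right q p) (fst_le_pmSigma_left q p) fun x => ?_
  refine snd_add_le hq ?_ ?_ fun y => ?_
  · exact add_le_add (fst_le_pmSigma_left q p) (fst_le hp x)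
  · rw [add_comm]
    exact add_le_add (fst_le_pmSigma_right q p) (hp x).1
  · calc α x y + q.1 + p.1 = α x y + p.1 + q.1 := by ring
      _ ≤ p.2 x + p.2 y + q.1 := add_le_add (add_fst_le hp x y) le_rfl
      _ = p.2 x + (p.2 y + q.1) := by ring
      _ ≤ p.2 x + (pmSigma q p + q.2 y) := add_le_add le_rfl (add_le_pmSigma_add q p y)
      _ = pmSigma q p + p.2 x + q.2 y := by ring

theorem pmSigma_comm {p q : ℝ≥0∞ × (X → ℝ≥0∞)} (hp : p ∈ pmTightSpan α)
    (hq : q ∈ pmTightSpan α) : pmSigma p q = pmSigma q p :=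
  le_antisymm (pmSigma_le_comm hp hq) (pmSigma_le_comm hq hp)

theorem pmSigma_triangle (p q t : ℝ≥0∞ × (X → ℝ≥0∞)) :
    pmSigma p t + q.1 ≤ pmSigma p q + pmSigma q t := by
  have hq : q.1 ≤ pmSigma p q + pmSigma q t := (fst_le_pmSigma_right p q).trans le_self_add
  by_cases hqt : q.1 = ∞
  · rw [hqt, top_le_iff] at hq
    simp [hq]
  suffices h : pmSigma p t ≤ pmSigma p q + pmSigma q t - q.1 by
    calc _ ≤ _ := add_le_add_left h _
      _ = _ := tsub_add_cancel_of_le hq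
  refine sup_le (sup_le ?_ ?_) (iSup_le fun x => ?_) <;>
    refine ENNReal.le_sub_of_add_le_right hqt ?_
  · exact add_le_add (fst_le_pmSigma_left p q) (fst_le_pmSigma_left q t)
  · rw [add_comm]
    exact add_le_add (fst_le_pmSigma_right p q) (fst_le_pmSigma_right q t)
  · refine tsub_add_le hq ?_
    have a := add_le_pmSigma_add p q x
    have b := add_le_pmSigma_add q t x
    by_cases hx : q.2 x = ∞
    · rw [hx, top_add, top_le_iff] at a
      calc _ ≤ (∞ : ℝ≥0∞) + pmSigma q t := by simp
        _ = pmSigma p q + p.2 x + pmSigma q t := by rw [a]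
        _ = _ := by ring
    · rw [← ENNReal.add_le_add_iff_right hx]
      calc t.2 x + p.1 + q.1 + q.2 x = (q.2 x + p.1) + (t.2 x + q.1) := by ring
        _ ≤ (pmSigma p q + p.2 x) + (pmSigma q t + q.2 x) := add_le_add a b
        _ = _ := by ring

/-- The canonical map from a partial metric space to its tight span. -/
def embed (α : X → X → ℝ≥0∞) (x : X) : ℝ≥0∞ × (X → ℝ≥0∞) := (α x x, α x)

theorem embed_mem (hα1 : ∀ x y, α x x ⊔ α y y ≤ α x y) (hαsym : ∀ x y, α x y = α y x)
    (hαtri : ∀ x y z, α x z + α y y ≤ α x y + α y z) (x : X) :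
    embed α x ∈ pmTightSpan α := by
  intro y
  have hxx : α x x ≤ α x y := le_sup_left.trans (hα1 x y)
  have hyy : α y y ≤ α x y := le_sup_right.trans (hα1 x y)
  refine ⟨hyy, le_antisymm ?_ (sup_le (sup_le hxx hyy) (iSup_le fun z => ?_))⟩
  · simp only [embed]
    -- The index `x` attains the supremum, unless `α x x = ∞`, where the first term does.
    by_cases h : α x x = ∞
    · simp [h]
    · refine le_sup_of_le_right (le_iSup_of_le x ?_)
      rw [ENNReal.add_sub_cancel_right h, hαsym]
  · rw [tsub_le_iff_right]
    simp only [embed]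
    rw [hαsym x y]
    exact hαtri y x z

theorem pmSigma_embed (hα1 : ∀ x y, α x x ⊔ α y y ≤ α x y) (hαsym : ∀ x y, α x y = α y x)
    (hαtri : ∀ x y z, α x z + α y y ≤ α x y + α y z)
    {p : ℝ≥0∞ × (X → ℝ≥0∞)} (hp : p ∈ pmTightSpan α) (x : X) :
    pmSigma (embed α x) p = p.2 x := by
  refine le_antisymm (pmSigma_le (hp x).1 (fst_le hp x) fun y =>
    lipschitz hα1 hαsym hαtri hp x y) ?_
  by_cases h : α x x = ∞
  · have : α x x ≤ pmSigma (embed α x) p := fst_le_pmSigma_left (embed α x) p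
    rw [h, top_le_iff] at this
    simp [this]
  · exact (ENNReal.add_le_add_iff_right h).1 (add_le_pmSigma_add (embed α x) p x)

end PMTightSpan

open PMTightSpan in
/-- the tight span of a partial metric space is hyperconvex. -/
theorem pmTightSpan_hyperconvex
    {X : Type*} (α : X → X → ℝ≥0∞)
    (hα1 : ∀ x y, α x x ⊔ α y y ≤ α x y)
    (hαsym : ∀ x y, α x y = α y x)
    (hαtri : ∀ x y z, α x z + α y y ≤ α x y + α y z) :
    ∀ (r : ℝ≥0∞) (Θ : ℝ≥0∞ × (X → ℝ≥0∞) → ℝ≥0∞),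
      (∀ p ∈ pmTightSpan α, r ≤ Θ p) →
      (∀ p ∈ pmTightSpan α, pmSigma p p ≤ Θ p) →
      (∀ p ∈ pmTightSpan α, ∀ q ∈ pmTightSpan α, pmSigma p q + r ≤ Θ p + Θ q) →
      ∃ ζ ∈ pmTightSpan α, ∀ p ∈ pmTightSpan α, pmSigma p ζ ≤ Θ p := by
  intro r Θ h1 h2 h3
  let β : pmTightSpan α → pmTightSpan α → ℝ≥0∞ := fun p q => pmSigma p.1 q.1
  have hβ1 : ∀ p q, β p p ⊔ β q q ≤ β p q := fun p q => by
    simp only [β, pmSigma_self]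
    exact sup_le (fst_le_pmSigma_left _ _) (fst_le_pmSigma_right _ _)
  have hβsym : ∀ p q, β p q = β q p := fun p q => pmSigma_comm p.2 q.2
  have hβtri : ∀ p q t, β p t + β q q ≤ β p q + β q t := fun p q t => by
    simp only [β, pmSigma_self]
    exact pmSigma_triangle _ _ _
  obtain ⟨Θ', hle, hΘ'⟩ := exists_le_mem_pmTightSpan (α := β) hβsym r (fun p => Θ p.1)
    (fun p => h1 p.1 p.2) (fun p => h2 p.1 p.2) (fun p q => h3 p.1 p.2 q.1 q.2)
  let h : X → pmTightSpan α := fun x => ⟨embed α x, embed_mem hα1 hαsym hαtri x⟩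
  have hβh : ∀ x p, β (h x) p = p.1.2 x := fun x p => pmSigma_embed hα1 hαsym hαtri p.2 x
  have hr : ∀ p, r ≤ Θ' p := fun p => fst_le hΘ' p
  have hp1 : ∀ p, p.1.1 ≤ Θ' p := fun p => (pmSigma_self p.1).ge.trans (hΘ' p).1
  have hlip : ∀ p x, Θ' (h x) + p.1.1 ≤ Θ' p + p.1.2 x := fun p x => by
    have := lipschitz hβ1 hβsym hβtri hΘ' p (h x)
    rw [hβsym p (h x), hβh] at this
    simpa only [β, pmSigma_self] using this
  have hself : ∀ x, α x x ≤ Θ' (h x) := fun x => hp1 (h x)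
  refine ⟨(r, fun x => Θ' (h x)), fun x => ⟨hself x, le_antisymm ?_ ?_⟩, fun p hp => ?_⟩
  · simp only
    set f := r ⊔ α x x ⊔ ⨆ y, (α x y + r - Θ' (h y)) with hf
    have hrf : r ≤ f := le_sup_left.trans le_sup_left
    have haf : α x x ≤ f := le_sup_right.trans le_sup_left
    have hyf : ∀ y, α x y + r ≤ f + Θ' (h y) := fun y => by
      rw [← tsub_le_iff_right]
      exact le_sup_of_le_right (le_iSup (fun y => α x y + r - Θ' (h y)) y)
    have key : Θ' (h x) + 0 ≤ f := by
      refine snd_add_le hΘ' (by simpa using hrf) ?_ fun p => ?_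
      · rw [hβh]; simpa [h, embed] using haf
      · rw [hβh, add_zero]
        refine snd_add_le p.2 ?_ (add_le_add haf (hr p)) fun y => ?_
        · simp only
          rw [add_comm]
          exact add_le_add hrf (hp1 p)
        · calc α x y + p.1.1 + r = α x y + r + p.1.1 := by ring
            _ ≤ f + Θ' (h y) + p.1.1 := add_le_add (hyf y) le_rfl
            _ = f + (Θ' (h y) + p.1.1) := by ring
            _ ≤ f + (Θ' p + p.1.2 y) := add_le_add le_rfl (hlip p y)
            _ = f + Θ' p + p.1.2 y := by ring
    simpa using key
  · refine sup_le (sup_le (hr _) (hself x)) (iSup_le fun y => ?_)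
    rw [tsub_le_iff_right]
    have := add_fst_le hΘ' (h x) (h y)
    rw [hβh] at this
    rw [hαsym x y]
    simpa [h, embed, hαsym x y] using this
  · exact (pmSigma_le (hp1 ⟨p, hp⟩) (hr ⟨p, hp⟩) (hlip ⟨p, hp⟩)).trans (hle ⟨p, hp⟩)
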